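/- Theorem 1.1: let n be a nonnegative integer, Re(a) > 0 and 2n < Re(s) with s − 2n ≠ 1. Then S_n(a,s) := ∫₀^∞ t^{2n} sin(s·arctan(t/a)) / ((a² + t²)^{s/2}(e^{2πt} − 1)) dt equals (1/2) Σ_{m=0}^{2n} (−1)^{m+n} C(2n,m) a^m P₁(a, m+s−2n), where P₁(a,s) = ζ(s,a) − a^{−s}/2 − a^{1−s}/(s−1). -/

import Mathlib

open Real Complex MeasureTheory Set Finset

/-- The analytically continued Hurwitz zeta function `ζ(s, a)` for real `a > 0`,
expressed via Mathlib's periodic Hurwitz zeta by removing the initial terms. -/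
noncomputable def HZ (s : ℂ) (a : ℝ) : ℂ :=
  HurwitzZeta.hurwitzZeta (a : UnitAddCircle) s -
    ∑ j ∈ Finset.range (⌈a⌉ - 1).toNat, ((a : ℂ) - ((⌈a⌉ : ℤ) - 1) + j) ^ (-s)

/-- `P₁(a, s) = ζ(s, a) − a^{−s}/2 − a^{1−s}/(s−1)`. -/
noncomputable def P1 (a : ℝ) (s : ℂ) : ℂ :=
  HZ s a - (a : ℂ) ^ (-s) / 2 - (a : ℂ) ^ (1 - s) / (s - 1)

/-!
Since `sin (s arctan (t / a)) / (a² + t²)^(s/2) = ((a - it)⁻ˢ - (a + it)⁻ˢ) / 2i`, expanding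
`t^(2n) = (-1)ⁿ ((a ± it) - a)^(2n)` binomially reduces the claim to `n = 0`, where it is Hermite's
formula `∫₀^∞ sin (s arctan (t / a)) / ((a² + t²)^(s/2) (e^{2πt} - 1)) dt = P₁(a, s) / 2`.

For `1 < Re s` write the kernel as `Γ(s)⁻¹ ∫₀^∞ xˢ⁻¹ e⁻ᵃˣ sin (tx) dx` and exchange the integrals.
Expanding `1 / (e^{2πt} - 1)` geometrically, the partial fractions of the cotangent give Legendre's
integral `∫₀^∞ sin (tx) / (e^{2πt} - 1) dt = (1 / (1 - e⁻ˣ) - 1 / 2 - 1 / x) / 2`, and the Mellin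
transforms of the three terms times `e⁻ᵃˣ` are `Γ(s)` times the three terms of `P₁`.

Hermite's integral is entire in `s`, because `1 / (e^{2πt} - 1)` beats every power of `a² + t²`, so
its formula extends to the connected set `ℂ \ {1}`.
-/

open Filter Topology Asymptotics

section ParametricIntegral

variable {α E : Type*} [MeasurableSpace α] {μ : Measure α} [NormedAddCommGroup E] [NormedSpace ℂ E]

theorem aestronglyMeasurable_deriv_of_param {F : ℂ → α → E} {c : ℂ}
    (hF_meas : ∀ᶠ z in 𝓝 c, AEStronglyMeasurable (F z) μ)
    (hF_diff : ∀ᵐ x ∂μ, DifferentiableAt ℂ (F · x) c) :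
    AEStronglyMeasurable (fun x ↦ deriv (F · x) c) μ := by
  obtain ⟨u, hu⟩ := exists_seq_tendsto (𝓝[≠] c)
  have hu_nhds : Tendsto u atTop (𝓝 c) := hu.mono_right nhdsWithin_le_nhds
  obtain ⟨N, hN⟩ := eventually_atTop.1 (hu_nhds.eventually hF_meas)
  refine aestronglyMeasurable_of_tendsto_ae atTop
    (f := fun n x ↦ slope (F · x) c (u (n + N))) (fun n ↦ ?_) ?_
  · simp only [slope_def_module]
    exact ((hN _ (Nat.le_add_left N n)).sub hF_meas.self_of_nhds).const_smul _
  · filter_upwards [hF_diff] with x hx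
    exact hx.hasDerivAt.tendsto_slope.comp (hu.comp (tendsto_add_atTop_nat N))

-- Cauchy's estimate turns the bound on `F` into the bound on its derivative needed to
-- differentiate under the integral sign.
theorem differentiableAt_integral_of_norm_le {F : ℂ → α → E} {bound : α → ℝ} {c : ℂ} {U : Set ℂ}
    (hU : U ∈ 𝓝 c) (hF_meas : ∀ z ∈ U, AEStronglyMeasurable (F z) μ)
    (hF_diff : ∀ᵐ x ∂μ, DifferentiableOn ℂ (F · x) U)
    (hF_bound : ∀ᵐ x ∂μ, ∀ z ∈ U, ‖F z x‖ ≤ bound x) (hbound : Integrable bound μ) :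
    DifferentiableAt ℂ (fun z ↦ ∫ x, F z x ∂μ) c := by
  obtain ⟨r, hr, hrU⟩ := Metric.nhds_basis_closedBall.mem_iff.1 hU
  have hball : ∀ z ∈ Metric.ball c (r / 2), Metric.closedBall z (r / 2) ⊆ U := fun z hz ↦
    (Metric.closedBall_subset_closedBall' (by linarith [Metric.mem_ball.1 hz])).trans hrU
  have hmem : ∀ z ∈ Metric.ball c (r / 2), U ∈ 𝓝 z := fun z hz ↦
    mem_of_superset (Metric.closedBall_mem_nhds z (by positivity)) (hball z hz)
  refine (hasDerivAt_integral_of_dominated_loc_of_deriv_le (Metric.ball_mem_nhds c (half_pos hr))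
    (F' := fun z x ↦ deriv (F · x) z) (bound := fun x ↦ bound x / (r / 2))
    (eventually_of_mem hU hF_meas) ?_ ?_ ?_ (hbound.div_const _) ?_).2.differentiableAt
  · exact hbound.mono' (hF_meas c (mem_of_mem_nhds hU))
      (hF_bound.mono fun x hx ↦ hx c (mem_of_mem_nhds hU))
  · exact aestronglyMeasurable_deriv_of_param (eventually_of_mem hU hF_meas)
      (hF_diff.mono fun x hx ↦ hx.differentiableAt hU)
  · filter_upwards [hF_diff, hF_bound] with x hx_diff hx_bound z hz
    refine norm_deriv_le_of_forall_mem_sphere_norm_le (half_pos hr) ?_ fun w hw ↦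
      hx_bound w (hball z hz (Metric.sphere_subset_closedBall hw))
    exact (hx_diff.mono (hball z hz)).diffContOnCl_ball subset_rfl
  · filter_upwards [hF_diff] with x hx z hz
    exact (hx.differentiableAt (hmem z hz)).hasDerivAt

end ParametricIntegral

section LaplaceTransform

variable {s z : ℂ}

theorem integrableOn_rpow_mul_exp_neg_mul {σ b : ℝ} (hσ : -1 < σ) (hb : 0 < b) :
    IntegrableOn (fun x : ℝ ↦ x ^ σ * Real.exp (-b * x)) (Ioi 0) := by
  simpa only [Real.rpow_one] using integrableOn_rpow_mul_exp_neg_mul_rpow hσ one_pos hb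

theorem norm_cpow_mul_cexp_neg_mul {x : ℝ} (hx : 0 < x) :
    ‖(x : ℂ) ^ (s - 1) * Complex.exp (-(z * x))‖ = x ^ (s.re - 1) * Real.exp (-z.re * x) := by
  rw [norm_mul, Complex.norm_cpow_eq_rpow_re_of_pos hx, Complex.norm_exp]
  simp

theorem integrableOn_cpow_mul_cexp_neg_mul (hs : 0 < s.re) (hz : 0 < z.re) :
    IntegrableOn (fun x : ℝ ↦ (x : ℂ) ^ (s - 1) * Complex.exp (-(z * x))) (Ioi 0) := by
  refine (integrableOn_rpow_mul_exp_neg_mul (by linarith) hz).mono'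
    (by fun_prop : Measurable _).aestronglyMeasurable
    (ae_restrict_of_forall_mem measurableSet_Ioi fun x hx ↦ (norm_cpow_mul_cexp_neg_mul hx).le)

theorem differentiableAt_integral_cpow_mul_cexp_neg_mul (hs : 0 < s.re) (hz : 0 < z.re) :
    DifferentiableAt ℂ
      (fun z : ℂ ↦ ∫ x in Ioi (0 : ℝ), (x : ℂ) ^ (s - 1) * Complex.exp (-(z * x))) z := by
  refine differentiableAt_integral_of_norm_le (U := {w | z.re / 2 < w.re})
    ((isOpen_lt continuous_const Complex.continuous_re).mem_nhds (half_lt_self hz))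
    (fun w _ ↦ (by fun_prop : Measurable _).aestronglyMeasurable)
    (ae_of_all _ fun x ↦ by fun_prop) ?_
    (integrableOn_rpow_mul_exp_neg_mul (by linarith : -1 < s.re - 1) (half_pos hz))
  filter_upwards [ae_restrict_mem measurableSet_Ioi] with x (hx : 0 < x) w hw
  rw [norm_cpow_mul_cexp_neg_mul hx]
  gcongr

theorem integral_cpow_mul_cexp_neg_mul_Ioi (hs : 0 < s.re) (hz : 0 < z.re) :
    ∫ x in Ioi (0 : ℝ), (x : ℂ) ^ (s - 1) * Complex.exp (-(z * x)) =
      z ^ (-s) * Complex.Gamma s := by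
  have hU : IsOpen {w : ℂ | 0 < w.re} := isOpen_lt continuous_const Complex.continuous_re
  have hdiff : DifferentiableOn ℂ (fun w : ℂ ↦ w ^ (-s) * Complex.Gamma s) {w | 0 < w.re} :=
    fun w hw ↦ ((differentiableAt_id.cpow_const (Or.inl hw)).mul_const _).differentiableWithinAt
  have hdiff_int : DifferentiableOn ℂ
      (fun w : ℂ ↦ ∫ x in Ioi (0 : ℝ), (x : ℂ) ^ (s - 1) * Complex.exp (-(w * x)))
      {w | 0 < w.re} :=
    fun w hw ↦ (differentiableAt_integral_cpow_mul_cexp_neg_mul hs hw).differentiableWithinAt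
  have hreal : ∀ r : ℝ, 0 < r → ∫ x in Ioi (0 : ℝ), (x : ℂ) ^ (s - 1) * Complex.exp (-(r * x)) =
      (r : ℂ) ^ (-s) * Complex.Gamma s := by
    intro r hr
    rw [Complex.integral_cpow_mul_exp_neg_mul_Ioi hs hr, one_div, Complex.inv_cpow,
      Complex.cpow_neg]
    rw [Complex.arg_ofReal_of_nonneg hr.le]
    exact Real.pi_pos.ne
  have htendsto : Tendsto ((↑) : ℝ → ℂ) (𝓝[≠] 1) (𝓝[≠] 1) := by
    simpa using! Complex.continuous_ofReal.continuousAt.continuousWithinAt.tendsto_nhdsWithin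
      (x := (1 : ℝ)) (s := {1}ᶜ) (t := {1}ᶜ) (fun r hr ↦ by simpa using hr)
  have hpos : ∀ᶠ r : ℝ in 𝓝[≠] 1, 0 < r := eventually_nhdsWithin_of_eventually_nhds
    (eventually_gt_nhds one_pos)
  exact (hdiff_int.analyticOnNhd hU).eqOn_of_preconnected_of_frequently_eq
    (hdiff.analyticOnNhd hU) (convex_halfSpace_re_gt 0).isPreconnected
    (by simp : (1 : ℂ) ∈ {w : ℂ | 0 < w.re}) (htendsto.frequently (hpos.mono hreal).frequently) hz

end LaplaceTransform

section LegendreIntegral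

variable {x : ℝ}

theorem exp_sub_one_pos (hx : 0 < x) : 0 < Real.exp x - 1 :=
  sub_pos.2 (Real.one_lt_exp_iff.2 hx)

theorem div_exp_sub_one_le_exp_neg_half (hx : 0 < x) :
    x / (Real.exp x - 1) ≤ Real.exp (-(x / 2)) := by
  have hsinh : x / 2 ≤ Real.sinh (x / 2) := Real.self_le_sinh_iff.2 (half_pos hx).le
  have hexp : Real.exp (-(x / 2)) * (Real.exp x - 1) = 2 * Real.sinh (x / 2) := by
    rw [Real.sinh_eq, mul_sub, ← Real.exp_add, mul_one]
    ring_nf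
  rw [div_le_iff₀ (exp_sub_one_pos hx), hexp]
  linarith

theorem div_exp_two_pi_mul_sub_one_le {t : ℝ} (ht : 0 < t) :
    t / (Real.exp (2 * π * t) - 1) ≤ Real.exp (-π * t) := by
  have hle := div_exp_sub_one_le_exp_neg_half (x := 2 * π * t) (by positivity)
  have hnonneg : 0 ≤ t / (Real.exp (2 * π * t) - 1) :=
    div_nonneg ht.le (exp_sub_one_pos (by positivity)).le
  calc t / (Real.exp (2 * π * t) - 1)
      ≤ 2 * π * (t / (Real.exp (2 * π * t) - 1)) :=
        le_mul_of_one_le_left hnonneg (by linarith [Real.pi_gt_three])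
    _ = 2 * π * t / (Real.exp (2 * π * t) - 1) := (mul_div_assoc ..).symm
    _ ≤ Real.exp (-(2 * π * t / 2)) := hle
    _ = Real.exp (-π * t) := by ring_nf

theorem integrableOn_div_exp_two_pi_mul_sub_one :
    IntegrableOn (fun t : ℝ ↦ t / (Real.exp (2 * π * t) - 1)) (Ioi 0) := by
  refine (integrableOn_exp_mul_Ioi (neg_lt_zero.2 Real.pi_pos) 0).mono'
    (by fun_prop : Measurable _).aestronglyMeasurable ?_
  filter_upwards [ae_restrict_mem measurableSet_Ioi] with t (ht : 0 < t)
  rw [Real.norm_of_nonneg (div_nonneg ht.le (exp_sub_one_pos (by positivity)).le)]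
  exact div_exp_two_pi_mul_sub_one_le ht

theorem hasSum_exp_neg_succ_mul (hx : 0 < x) :
    HasSum (fun k : ℕ ↦ Real.exp (-((k + 1) * x))) (1 / (Real.exp x - 1)) := by
  have hsum := (hasSum_geometric_of_lt_one (Real.exp_pos (-x)).le
    (Real.exp_lt_one_iff.2 (neg_lt_zero.2 hx))).mul_left (Real.exp (-x))
  have hterm : ∀ k : ℕ, Real.exp (-x) * Real.exp (-x) ^ k = Real.exp (-((k + 1) * x)) := by
    intro k
    rw [← Real.exp_nat_mul, ← Real.exp_add]
    ring_nf
  have hlim : Real.exp (-x) * (1 - Real.exp (-x))⁻¹ = 1 / (Real.exp x - 1) := by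
    have := exp_sub_one_pos hx
    rw [Real.exp_neg]
    field_simp
  simpa only [hterm, hlim] using hsum

theorem integral_sin_mul_exp_neg_mul {b : ℝ} (hb : 0 < b) (x : ℝ) :
    ∫ t in Ioi (0 : ℝ), Real.sin (t * x) * Real.exp (-b * t) = x / (x ^ 2 + b ^ 2) := by
  have hre : (-b + x * I : ℂ).re < 0 := by simpa using hb
  have him (t : ℝ) : Complex.imCLM (Complex.exp ((-b + x * I) * t)) =
      Real.sin (t * x) * Real.exp (-b * t) := by
    simp [Complex.exp_im, mul_comm]
  have h := Complex.imCLM.integral_comp_comm (integrableOn_exp_mul_complex_Ioi hre 0)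
  simp only [him, integral_exp_mul_complex_Ioi hre 0] at h
  rw [h]
  simp only [ofReal_zero, mul_zero, Complex.exp_zero, imCLM_apply, div_im, neg_im, one_im, neg_zero,
    add_re, neg_re, ofReal_re, mul_re, I_re, ofReal_im, I_im, mul_one, sub_self, add_zero, mul_neg,
    zero_mul, normSq_apply, neg_mul, neg_neg, add_im, mul_im, zero_add, zero_div, one_re, one_mul,
    zero_sub]
  ring

theorem hasSum_integral_sin_div_exp_two_pi_mul_sub_one (x : ℝ) :
    HasSum (fun k : ℕ ↦ x / (x ^ 2 + (2 * π * (k + 1)) ^ 2))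
      (∫ t in Ioi (0 : ℝ), Real.sin (t * x) / (Real.exp (2 * π * t) - 1)) := by
  have hgeom {t : ℝ} (ht : 0 < t) : HasSum (fun k : ℕ ↦ Real.exp (-(2 * π * (k + 1)) * t))
      (1 / (Real.exp (2 * π * t) - 1)) := by
    convert! hasSum_exp_neg_succ_mul (x := 2 * π * t) (by positivity) using 3
    ring
  have hterm (k : ℕ) := integral_sin_mul_exp_neg_mul (b := 2 * π * (k + 1)) (by positivity) x
  simp only [← hterm]
  refine hasSum_integral_of_dominated_convergence
    (fun (k : ℕ) t ↦ |t * x| * Real.exp (-(2 * π * (k + 1)) * t)) ?_ ?_ ?_ ?_ ?_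
  · exact fun k ↦ Continuous.aestronglyMeasurable (by fun_prop)
  · refine fun k ↦ ae_of_all _ fun t ↦ ?_
    rw [norm_mul, Real.norm_eq_abs, Real.norm_eq_abs, Real.abs_exp]
    gcongr ?_ * _
    exact Real.abs_sin_le_abs
  · filter_upwards [ae_restrict_mem measurableSet_Ioi] with t ht
    exact (hgeom ht).summable.mul_left _
  · refine (integrableOn_div_exp_two_pi_mul_sub_one.const_mul |x|).congr ?_
    filter_upwards [ae_restrict_mem measurableSet_Ioi] with t (ht : 0 < t)
    rw [((hgeom ht).mul_left _).tsum_eq, abs_mul, abs_of_pos ht]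
    ring
  · filter_upwards [ae_restrict_mem measurableSet_Ioi] with t ht
    simpa only [mul_one_div] using (hgeom ht).mul_left (Real.sin (t * x))

/-- The kernel `1 / (1 - e⁻ˣ) - 1 / 2 - 1 / x` of Binet's formula for `log Γ`. It is half the
deviation of `coth (x / 2)` from its pole `2 / x`, and `P1 a s` is the Mellin transform of
`e⁻ᵃˣ` times it, divided by `Γ(s)`. -/
noncomputable def binetKernel (x : ℝ) : ℝ := 1 / (1 - Real.exp (-x)) - 1 / 2 - 1 / x

theorem pi_mul_cot_sub_one_div_eq_binetKernel (hx : x ≠ 0) :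
    π * Complex.cot (π * (x * I / (2 * π))) - 1 / (x * I / (2 * π)) =
      -(2 * π * I) * binetKernel x := by
  have hpi : (π : ℂ) ≠ 0 := by exact_mod_cast Real.pi_ne_zero
  have hxc : (x : ℂ) ≠ 0 := by exact_mod_cast hx
  have hexp : 1 - Complex.exp (-x) ≠ 0 := by
    have : Real.exp (-x) ≠ 1 := by simpa using hx
    exact sub_ne_zero.2 (by exact_mod_cast this.symm)
  have harg : 2 * π * I * (x * I / (2 * π)) = -(x : ℂ) := by
    field_simp
    simp
  rw [Complex.cot_pi_eq_exp_ratio, harg, binetKernel]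
  push_cast
  field_simp
  ring_nf
  simp only [I_sq]
  ring

theorem ofReal_mul_I_add_ofReal_ne_zero {y : ℝ} (hy : y ≠ 0) (c : ℝ) : (y * I + c : ℂ) ≠ 0 :=
  fun h ↦ hy (by simpa using congrArg Complex.im h)

theorem one_div_mul_I_sub_add_one_div_mul_I_add {y : ℝ} (hy : y ≠ 0) (k : ℝ) :
    1 / (y * I - k) + 1 / (y * I + k) = -(2 * I) * ((y / (y ^ 2 + k ^ 2) : ℝ) : ℂ) := by
  have hadd := ofReal_mul_I_add_ofReal_ne_zero hy k
  have hsub : (y * I - k : ℂ) ≠ 0 := by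
    simpa [sub_eq_add_neg] using ofReal_mul_I_add_ofReal_ne_zero hy (-k)
  have hprod : ((y ^ 2 + k ^ 2 : ℝ) : ℂ) = -((y * I - k) * (y * I + k)) := by
    push_cast
    linear_combination (y : ℂ) ^ 2 * I_sq
  rw [Complex.ofReal_div, hprod]
  field_simp
  ring

theorem hasSum_binetKernel (hx : x ≠ 0) :
    HasSum (fun k : ℕ ↦ x / (x ^ 2 + (2 * π * (k + 1)) ^ 2)) (binetKernel x / 2) := by
  set y : ℝ := x / (2 * π) with hy_def
  have hy : y ≠ 0 := div_ne_zero hx (by positivity)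
  have hyI : (y * I : ℂ) = x * I / (2 * π) := by
    rw [hy_def]
    push_cast
    ring
  have hmem : (y * I : ℂ) ∈ Complex.integerComplement := by
    rintro ⟨m, hm⟩
    exact hy (by simpa using congrArg Complex.im hm.symm)
  have hcot := (summable_cotTerm hmem).hasSum
  rw [← cot_series_rep' hmem, hyI, pi_mul_cot_sub_one_div_eq_binetKernel hx, ← hyI] at hcot
  have hsum : HasSum (fun k : ℕ ↦ y / (y ^ 2 + (k + 1) ^ 2)) (π * binetKernel x) := by
    rw [← Complex.hasSum_ofReal, ← hasSum_mul_left_iff (a₂ := -(2 * I)) (by simp)]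
    convert! hcot using 1
    · ext k
      simpa [cotTerm] using (one_div_mul_I_sub_add_one_div_mul_I_add hy (k + 1)).symm
    · push_cast
      ring
  convert! hsum.mul_left (1 / (2 * π)) using 1
  · ext k
    rw [hy_def]
    field_simp
  · field_simp

theorem integral_sin_div_exp_two_pi_mul_sub_one (hx : x ≠ 0) :
    ∫ t in Ioi (0 : ℝ), Real.sin (t * x) / (Real.exp (2 * π * t) - 1) = binetKernel x / 2 :=
  (hasSum_integral_sin_div_exp_two_pi_mul_sub_one x).unique (hasSum_binetKernel hx)

end LegendreIntegral

section HermiteKernel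

variable {a : ℝ} {s : ℂ} {t : ℝ}

/-- The factor `sin (s arctan (t / a)) / (a² + t²)^(s/2)` of Hermite's integrand, that is,
`((a - it)⁻ˢ - (a + it)⁻ˢ) / 2i`. -/
noncomputable def hermiteKernel (a : ℝ) (s : ℂ) (t : ℝ) : ℂ :=
  Complex.sin (s * (Real.arctan (t / a) : ℂ)) / ((a ^ 2 + t ^ 2 : ℝ) : ℂ) ^ (s / 2)

theorem add_mul_I_ne_zero (ha : a ≠ 0) (t : ℝ) : (a + t * I : ℂ) ≠ 0 :=
  fun h ↦ ha (by simpa using congrArg Complex.re h)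

theorem log_add_mul_I (ha : 0 < a) (t : ℝ) :
    Complex.log (a + t * I) =
      Complex.log ((a ^ 2 + t ^ 2 : ℝ) : ℂ) / 2 + (Real.arctan (t / a) : ℂ) * I := by
  have harg : Complex.arg (a + t * I) = Real.arctan (t / a) := by
    have hlt := abs_lt.1 (Complex.abs_arg_lt_pi_div_two_iff.2
      (Or.inl (by simpa using ha : 0 < (a + t * I : ℂ).re)))
    rw [← Real.arctan_tan hlt.1 hlt.2, Complex.tan_arg]
    simp
  have hnorm : Real.log ‖(a + t * I : ℂ)‖ = Real.log (a ^ 2 + t ^ 2) / 2 := by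
    rw [Complex.norm_add_mul_I, Real.log_sqrt (by positivity)]
  rw [Complex.log, harg, hnorm, Complex.ofReal_div, Complex.ofReal_log (by positivity)]
  norm_num

theorem add_mul_I_cpow_neg (ha : 0 < a) (s : ℂ) (t : ℝ) :
    (a + t * I : ℂ) ^ (-s) =
      Complex.exp (-(s * Real.arctan (t / a)) * I) / ((a ^ 2 + t ^ 2 : ℝ) : ℂ) ^ (s / 2) := by
  have hpos : ((a ^ 2 + t ^ 2 : ℝ) : ℂ) ≠ 0 := by
    have : 0 < a ^ 2 + t ^ 2 := by positivity
    exact_mod_cast this.ne'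
  rw [Complex.cpow_def_of_ne_zero (add_mul_I_ne_zero ha.ne' t), Complex.cpow_def_of_ne_zero hpos,
    log_add_mul_I ha, ← Complex.exp_sub]
  ring_nf

theorem sub_mul_I_cpow_neg (ha : 0 < a) (s : ℂ) (t : ℝ) :
    (a - t * I : ℂ) ^ (-s) =
      Complex.exp (s * Real.arctan (t / a) * I) / ((a ^ 2 + t ^ 2 : ℝ) : ℂ) ^ (s / 2) := by
  have h := add_mul_I_cpow_neg ha s (-t)
  simpa only [Complex.ofReal_neg, neg_mul, ← sub_eq_add_neg, neg_div, Real.arctan_neg, mul_neg,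
    neg_neg, neg_sq] using h

theorem hermiteKernel_eq (ha : 0 < a) (s : ℂ) (t : ℝ) :
    hermiteKernel a s t = ((a - t * I : ℂ) ^ (-s) - (a + t * I : ℂ) ^ (-s)) / (2 * I) := by
  rw [sub_mul_I_cpow_neg ha, add_mul_I_cpow_neg ha, hermiteKernel, ← sub_div, div_right_comm]
  congr 1
  rw [Complex.sin, eq_div_iff (by simp)]
  linear_combination (Complex.exp (-(s * Real.arctan (t / a)) * I) -
    Complex.exp (s * Real.arctan (t / a) * I)) * I_sq

theorem differentiable_hermiteKernel (ha : a ≠ 0) (t : ℝ) :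
    Differentiable ℂ (fun s ↦ hermiteKernel a s t) := by
  have hpos : ((a ^ 2 + t ^ 2 : ℝ) : ℂ) ≠ 0 := by
    have : 0 < a ^ 2 + t ^ 2 := by positivity
    exact_mod_cast this.ne'
  intro s
  refine DifferentiableAt.div (by fun_prop) ?_ ?_
  · exact DifferentiableAt.const_cpow (by fun_prop) (Or.inl hpos)
  · exact fun h ↦ hpos ((Complex.cpow_eq_zero_iff _ _).1 h).1

theorem measurable_hermiteKernel (a : ℝ) (s : ℂ) : Measurable (hermiteKernel a s) := by
  unfold hermiteKernel
  fun_prop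

theorem abs_arctan_le_abs (x : ℝ) : |Real.arctan x| ≤ |x| := by
  wlog hx : 0 ≤ x generalizing x
  · simpa [Real.arctan_neg] using this (-x) (by linarith)
  rw [abs_of_nonneg hx, abs_of_nonneg (Real.arctan_nonneg.2 hx)]
  simpa using Real.le_tan (Real.arctan_nonneg.2 hx) (Real.arctan_lt_pi_div_two x)

theorem norm_sin_le_norm_mul_exp_norm (z : ℂ) : ‖Complex.sin z‖ ≤ ‖z‖ * Real.exp ‖z‖ := by
  have hexp (w : ℂ) : ‖Complex.exp w - 1‖ ≤ ‖w‖ * Real.exp ‖w‖ := by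
    simpa using Complex.norm_exp_sub_sum_le_norm_mul_exp w 1
  have hneg := hexp (-z * I)
  have hpos := hexp (z * I)
  simp only [norm_mul, norm_neg, Complex.norm_I, mul_one] at hneg hpos
  calc ‖Complex.sin z‖
      = ‖(Complex.exp (-z * I) - 1) - (Complex.exp (z * I) - 1)‖ / 2 := by
        rw [Complex.sin]; simp
    _ ≤ (‖z‖ * Real.exp ‖z‖ + ‖z‖ * Real.exp ‖z‖) / 2 := by
        gcongr
        exact (norm_sub_le _ _).trans (add_le_add hneg hpos)
    _ = ‖z‖ * Real.exp ‖z‖ := by ring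

theorem rpow_le_rpow_add_rpow_neg {u c R : ℝ} (hu : 0 < u) (hc : |c| ≤ R) :
    u ^ c ≤ u ^ R + u ^ (-R) := by
  obtain ⟨hneg, hpos⟩ := abs_le.1 hc
  rcases le_total 1 u with h | h
  · exact (Real.rpow_le_rpow_of_exponent_le h hpos).trans
      (le_add_of_nonneg_right (Real.rpow_nonneg hu.le _))
  · exact (Real.rpow_le_rpow_of_exponent_ge hu h hneg).trans
      (le_add_of_nonneg_left (Real.rpow_nonneg hu.le _))

theorem norm_hermiteKernel_le (ha : 0 < a) {R : ℝ} (hs : ‖s‖ ≤ R) (ht : 0 ≤ t) :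
    ‖hermiteKernel a s t‖ ≤ R / a * Real.exp (R * (π / 2)) *
      (t * ((a ^ 2 + t ^ 2) ^ (R / 2) + (a ^ 2 + t ^ 2) ^ (-(R / 2)))) := by
  have hR : 0 ≤ R := (norm_nonneg s).trans hs
  have hu : 0 < a ^ 2 + t ^ 2 := by positivity
  have hre : |-(s.re / 2)| ≤ R / 2 := by
    rw [abs_neg, abs_div, abs_two]
    gcongr
    exact (Complex.abs_re_le_norm s).trans hs
  have hsin : ‖Complex.sin (s * (Real.arctan (t / a) : ℂ))‖ ≤
      R * (t / a) * Real.exp (R * (π / 2)) := by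
    have hle : |Real.arctan (t / a)| ≤ t / a := by
      simpa only [abs_of_nonneg (div_nonneg ht ha.le)] using abs_arctan_le_abs (t / a)
    have hlt : |Real.arctan (t / a)| ≤ π / 2 :=
      abs_le.2 ⟨(Real.neg_pi_div_two_lt_arctan _).le, (Real.arctan_lt_pi_div_two _).le⟩
    refine (norm_sin_le_norm_mul_exp_norm _).trans ?_
    rw [norm_mul, Complex.norm_real, Real.norm_eq_abs]
    gcongr
  have hcpow : ‖((a ^ 2 + t ^ 2 : ℝ) : ℂ) ^ (s / 2)‖⁻¹ ≤
      (a ^ 2 + t ^ 2) ^ (R / 2) + (a ^ 2 + t ^ 2) ^ (-(R / 2)) := by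
    rw [Complex.norm_cpow_eq_rpow_re_of_pos hu, ← Real.rpow_neg hu.le]
    simpa using rpow_le_rpow_add_rpow_neg hu hre
  rw [hermiteKernel, norm_div, div_eq_mul_inv]
  calc _ ≤ R * (t / a) * Real.exp (R * (π / 2)) *
        ((a ^ 2 + t ^ 2) ^ (R / 2) + (a ^ 2 + t ^ 2) ^ (-(R / 2))) := by gcongr
    _ = _ := by ring

theorem integrableOn_sq_add_sq_rpow_mul_exp_neg_mul (ha : a ≠ 0) {b : ℝ} (hb : 0 < b) (c : ℝ) :
    IntegrableOn (fun t : ℝ ↦ (a ^ 2 + t ^ 2) ^ c * Real.exp (-b * t)) (Ioi 0) := by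
  have hu (t : ℝ) : 0 < a ^ 2 + t ^ 2 := by positivity
  have hsqrt (t : ℝ) : (a ^ 2 + t ^ 2) ^ c = √(a ^ 2 + t ^ 2) ^ (2 * c) := by
    rw [Real.sqrt_eq_rpow, ← Real.rpow_mul (hu t).le]
    ring_nf
  have htendsto : Tendsto (fun t : ℝ ↦ √(a ^ 2 + t ^ 2)) atTop atTop :=
    tendsto_sqrt_atTop.comp (tendsto_atTop_add_const_left _ _ (tendsto_pow_atTop two_ne_zero))
  have hrpow : (fun t : ℝ ↦ (a ^ 2 + t ^ 2) ^ c) =O[atTop] fun t ↦ Real.exp (b / 2 * t) := by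
    simp only [hsqrt]
    refine ((isLittleO_rpow_exp_pos_mul_atTop (2 * c) (half_pos hb)).isBigO.comp_tendsto
      htendsto).trans (.of_bound (Real.exp (b / 2 * |a|)) ?_)
    filter_upwards [eventually_ge_atTop 0] with t ht
    have hle : √(a ^ 2 + t ^ 2) ≤ |a| + t :=
      Real.sqrt_le_iff.2 ⟨by positivity, by nlinarith [sq_abs a, abs_nonneg a]⟩
    rw [Function.comp_apply, Real.norm_of_nonneg (Real.exp_pos _).le,
      Real.norm_of_nonneg (Real.exp_pos _).le, ← Real.exp_add, ← mul_add]
    gcongr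
  refine integrable_of_isBigO_exp_neg (half_pos hb) ?_ ?_
  · exact ((by fun_prop : Continuous fun t : ℝ ↦ a ^ 2 + t ^ 2).rpow_const fun t ↦
      Or.inl (hu t).ne').mul (by fun_prop) |>.continuousOn
  · refine (hrpow.mul (isBigO_refl (fun t ↦ Real.exp (-b * t)) atTop)).congr_right fun t ↦ ?_
    rw [← Real.exp_add]
    ring_nf

end HermiteKernel

section HermiteIntegral

variable {a : ℝ} {s : ℂ}

/-- Hermite's integral `∫₀^∞ sin (s arctan (t / a)) / ((a² + t²)^(s/2) (e^{2πt} - 1)) dt`. -/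
noncomputable def hermiteIntegral (a : ℝ) (s : ℂ) : ℂ :=
  ∫ t in Ioi (0 : ℝ), hermiteKernel a s t / ((Real.exp (2 * π * t) - 1 : ℝ) : ℂ)

theorem exists_integrable_bound_hermiteKernel_div (ha : 0 < a) (R : ℝ) :
    ∃ bound : ℝ → ℝ, IntegrableOn bound (Ioi 0) ∧ ∀ t ∈ Ioi (0 : ℝ), ∀ s ∈ Metric.ball (0 : ℂ) R,
      ‖hermiteKernel a s t / ((Real.exp (2 * π * t) - 1 : ℝ) : ℂ)‖ ≤ bound t := by
  refine ⟨fun t ↦ R / a * Real.exp (R * (π / 2)) *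
    ((a ^ 2 + t ^ 2) ^ (R / 2) * Real.exp (-π * t) +
      (a ^ 2 + t ^ 2) ^ (-(R / 2)) * Real.exp (-π * t)), ?_, fun t (ht : 0 < t) s hs ↦ ?_⟩
  · exact ((integrableOn_sq_add_sq_rpow_mul_exp_neg_mul ha.ne' Real.pi_pos _).add
      (integrableOn_sq_add_sq_rpow_mul_exp_neg_mul ha.ne' Real.pi_pos _)).const_mul _
  have hsR : ‖s‖ ≤ R := (mem_ball_zero_iff.1 hs).le
  have hR : 0 ≤ R := (norm_nonneg s).trans hsR
  have hexp := exp_sub_one_pos (x := 2 * π * t) (by positivity)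
  rw [norm_div, Complex.norm_real, Real.norm_of_nonneg hexp.le]
  calc _ ≤ R / a * Real.exp (R * (π / 2)) *
        (t * ((a ^ 2 + t ^ 2) ^ (R / 2) + (a ^ 2 + t ^ 2) ^ (-(R / 2)))) /
          (Real.exp (2 * π * t) - 1) := by gcongr; exact norm_hermiteKernel_le ha hsR ht.le
    _ = R / a * Real.exp (R * (π / 2)) * ((a ^ 2 + t ^ 2) ^ (R / 2) +
        (a ^ 2 + t ^ 2) ^ (-(R / 2))) * (t / (Real.exp (2 * π * t) - 1)) := by ring
    _ ≤ R / a * Real.exp (R * (π / 2)) * ((a ^ 2 + t ^ 2) ^ (R / 2) +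
        (a ^ 2 + t ^ 2) ^ (-(R / 2))) * Real.exp (-π * t) := by
      gcongr
      exact div_exp_two_pi_mul_sub_one_le ht
    _ = _ := by ring

theorem measurable_hermiteKernel_div (a : ℝ) (s : ℂ) :
    Measurable fun t ↦ hermiteKernel a s t / ((Real.exp (2 * π * t) - 1 : ℝ) : ℂ) :=
  (measurable_hermiteKernel a s).div (by fun_prop)

theorem integrableOn_hermiteKernel_div (ha : 0 < a) (s : ℂ) :
    IntegrableOn (fun t ↦ hermiteKernel a s t / ((Real.exp (2 * π * t) - 1 : ℝ) : ℂ)) (Ioi 0) := by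
  obtain ⟨bound, hbound, hle⟩ := exists_integrable_bound_hermiteKernel_div ha (‖s‖ + 1)
  exact hbound.mono' (measurable_hermiteKernel_div a s).aestronglyMeasurable
    (ae_restrict_of_forall_mem measurableSet_Ioi fun t ht ↦ hle t ht s (by simp))

theorem differentiable_hermiteIntegral (ha : 0 < a) : Differentiable ℂ (hermiteIntegral a) := by
  intro s
  obtain ⟨bound, hbound, hle⟩ := exists_integrable_bound_hermiteKernel_div ha (‖s‖ + 1)
  exact differentiableAt_integral_of_norm_le (Metric.isOpen_ball.mem_nhds (by simp))
    (fun z _ ↦ (measurable_hermiteKernel_div a z).aestronglyMeasurable)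
    (ae_of_all _ fun t ↦ ((differentiable_hermiteKernel ha.ne' t).div_const _).differentiableOn)
    (ae_restrict_of_forall_mem measurableSet_Ioi hle) hbound

theorem integral_cpow_mul_exp_neg_mul_sin (ha : 0 < a) (hs : 0 < s.re) (t : ℝ) :
    ∫ x in Ioi (0 : ℝ), (x : ℂ) ^ (s - 1) * Complex.exp (-(a * x)) * (Real.sin (t * x) : ℂ) =
      Complex.Gamma s * hermiteKernel a s t := by
  have hsub : 0 < (a - t * I : ℂ).re := by simpa using ha
  have hadd : 0 < (a + t * I : ℂ).re := by simpa using ha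
  have hsin (x : ℝ) : Complex.exp (-(a * x)) * (Real.sin (t * x) : ℂ) =
      (Complex.exp (-((a - t * I) * x)) - Complex.exp (-((a + t * I) * x))) / (2 * I) := by
    rw [show -((a - t * I) * x : ℂ) = -(a * x) + t * x * I by ring,
      show -((a + t * I) * x : ℂ) = -(a * x) + -(t * x) * I by ring, Complex.exp_add,
      Complex.exp_add, Complex.ofReal_sin, Complex.ofReal_mul, Complex.sin, eq_div_iff (by simp)]
    linear_combination Complex.exp (-(a * x)) * (Complex.exp (-(t * x) * I) -
      Complex.exp (t * x * I)) * I_sq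
  calc _ = ∫ x in Ioi (0 : ℝ), ((x : ℂ) ^ (s - 1) * Complex.exp (-((a - t * I) * x)) -
        (x : ℂ) ^ (s - 1) * Complex.exp (-((a + t * I) * x))) / (2 * I) := by
        simp only [mul_assoc, hsin, mul_div_assoc', mul_sub]
    _ = Complex.Gamma s * hermiteKernel a s t := by
        rw [integral_div, integral_sub (integrableOn_cpow_mul_cexp_neg_mul hs hsub)
          (integrableOn_cpow_mul_cexp_neg_mul hs hadd), integral_cpow_mul_cexp_neg_mul_Ioi hs hsub,
          integral_cpow_mul_cexp_neg_mul_Ioi hs hadd, hermiteKernel_eq ha]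
        ring

theorem integrable_cpow_mul_exp_neg_mul_sin_div (ha : 0 < a) (hs : 0 < s.re) :
    Integrable (Function.uncurry fun t x : ℝ ↦ (x : ℂ) ^ (s - 1) * Complex.exp (-(a * x)) *
        ((Real.sin (t * x) / (Real.exp (2 * π * t) - 1) : ℝ) : ℂ))
      ((volume.restrict (Ioi 0)).prod (volume.restrict (Ioi 0))) := by
  refine (integrableOn_div_exp_two_pi_mul_sub_one.mul_prod
    (integrableOn_rpow_mul_exp_neg_mul (by linarith : -1 < s.re) ha)).mono' ?_ ?_
  · refine Measurable.aestronglyMeasurable ?_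
    unfold Function.uncurry
    fun_prop
  rw [Measure.prod_restrict]
  filter_upwards [ae_restrict_mem (measurableSet_Ioi.prod measurableSet_Ioi)]
  rintro ⟨t, x⟩ ⟨ht : 0 < t, hx : 0 < x⟩
  have hexp := exp_sub_one_pos (x := 2 * π * t) (by positivity)
  have hsin : |Real.sin (t * x)| ≤ t * x := by
    simpa only [abs_of_pos (mul_pos ht hx)] using Real.abs_sin_le_abs (x := t * x)
  have hrpow : x ^ s.re = x ^ (s.re - 1) * x := by
    rw [← Real.rpow_add_one hx.ne', sub_add_cancel]
  rw [Function.uncurry_apply_pair, norm_mul, norm_cpow_mul_cexp_neg_mul hx, Complex.norm_real,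
    Real.norm_eq_abs, abs_div, abs_of_pos hexp, Complex.ofReal_re]
  calc _ ≤ x ^ (s.re - 1) * Real.exp (-a * x) * (t * x / (Real.exp (2 * π * t) - 1)) := by gcongr
    _ = _ := by rw [hrpow]; ring


theorem integral_cpow_mul_exp_neg_mul_sin_div_left (ha : 0 < a) (hs : 0 < s.re) (t : ℝ) :
    ∫ x in Ioi (0 : ℝ), (x : ℂ) ^ (s - 1) * Complex.exp (-(a * x)) *
        ((Real.sin (t * x) / (Real.exp (2 * π * t) - 1) : ℝ) : ℂ) =
      Complex.Gamma s * (hermiteKernel a s t / ((Real.exp (2 * π * t) - 1 : ℝ) : ℂ)) := by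
  simp only [Complex.ofReal_div, mul_div_assoc', integral_div,
    integral_cpow_mul_exp_neg_mul_sin ha hs]

theorem integral_cpow_mul_exp_neg_mul_sin_div_right {x : ℝ} (hx : x ≠ 0) (a : ℝ) (s : ℂ) :
    ∫ t in Ioi (0 : ℝ), (x : ℂ) ^ (s - 1) * Complex.exp (-(a * x)) *
        ((Real.sin (t * x) / (Real.exp (2 * π * t) - 1) : ℝ) : ℂ) =
      (x : ℂ) ^ (s - 1) • (Complex.exp (-(a * x)) * binetKernel x) / 2 := by
  rw [integral_const_mul, integral_complex_ofReal, integral_sin_div_exp_two_pi_mul_sub_one hx,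
    smul_eq_mul]
  push_cast
  ring

theorem mellinConvergent_exp_neg_mul_binetKernel (ha : 0 < a) (hs : 0 < s.re) :
    MellinConvergent (fun x : ℝ ↦ Complex.exp (-(a * x)) * binetKernel x) s := by
  refine ((integrable_cpow_mul_exp_neg_mul_sin_div ha hs).integral_prod_right.mul_const 2).congr ?_
  filter_upwards [ae_restrict_mem measurableSet_Ioi] with x (hx : 0 < x)
  simp only [Function.uncurry_apply_pair,
    integral_cpow_mul_exp_neg_mul_sin_div_right hx.ne' a s, div_mul_cancel₀ _ (two_ne_zero' ℂ)]

theorem Gamma_mul_hermiteIntegral (ha : 0 < a) (hs : 0 < s.re) :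
    Complex.Gamma s * hermiteIntegral a s =
      mellin (fun x : ℝ ↦ Complex.exp (-(a * x)) * binetKernel x) s / 2 := by
  rw [hermiteIntegral, ← integral_const_mul, mellin, ← integral_div]
  simp only [← integral_cpow_mul_exp_neg_mul_sin_div_left ha hs]
  rw [integral_integral_swap (integrable_cpow_mul_exp_neg_mul_sin_div ha hs)]
  exact setIntegral_congr_fun measurableSet_Ioi fun x (hx : 0 < x) ↦
    integral_cpow_mul_exp_neg_mul_sin_div_right hx.ne' a s

end HermiteIntegral

section HurwitzZeta

variable {a : ℝ} {s : ℂ}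

-- With `N = ⌈a⌉ - 1`, the zeta function of the class of `a` in `ℝ / ℤ` is that of `a - N ∈ (0, 1]`,
-- and `HZ` removes its first `N` terms.
theorem hasSum_HZ (ha : 0 < a) (hs : 1 < s.re) :
    HasSum (fun n : ℕ ↦ 1 / (n + a : ℂ) ^ s) (HZ s a) := by
  set N := (⌈a⌉ - 1).toNat with hN_def
  have hN_int : (N : ℤ) = ⌈a⌉ - 1 := Int.toNat_of_nonneg (by linarith [Int.ceil_pos.2 ha])
  have hN_real : (N : ℝ) = ⌈a⌉ - 1 := by exact_mod_cast hN_int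
  have hN_complex : (N : ℂ) = ((⌈a⌉ : ℤ) : ℂ) - 1 := by exact_mod_cast hN_int
  have hmem : a - N ∈ Icc (0 : ℝ) 1 :=
    ⟨by linarith [Int.ceil_lt_add_one a], by linarith [Int.le_ceil a]⟩
  have hcoe : ((a - N : ℝ) : UnitAddCircle) = a := by
    rw [AddCircle.coe_sub, sub_eq_self, AddCircle.coe_eq_zero_iff]
    exact ⟨N, by simp⟩
  have hsum := (hasSum_nat_add_iff' N).2 (HurwitzZeta.hasSum_hurwitzZeta_of_one_lt_re hmem hs)
  rw [hcoe] at hsum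
  rw [HZ, ← hN_def, ← hN_complex]
  convert! hsum using 2 with n
  · push_cast
    ring_nf
  · refine Finset.sum_congr rfl fun j _ ↦ ?_
    rw [Complex.cpow_neg, one_div]
    push_cast
    ring_nf

theorem hasSum_exp_neg_add_mul (a : ℝ) {x : ℝ} (hx : 0 < x) :
    HasSum (fun k : ℕ ↦ (Real.exp (-(k + a) * x) : ℂ))
      (Complex.exp (-(a * x)) / (1 - Complex.exp (-x))) := by
  have hnorm : ‖Complex.exp (-x)‖ < 1 := by
    rw [Complex.norm_exp]
    simpa using hx
  rw [div_eq_mul_inv]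
  convert! (hasSum_geometric_of_norm_lt_one hnorm).mul_left (Complex.exp (-(a * x))) using 2 with k
  rw [← Complex.exp_nat_mul, ← Complex.exp_add]
  push_cast
  ring_nf

theorem mellin_exp_neg_mul_div_one_sub_exp_neg (ha : 0 < a) (hs : 1 < s.re) :
    mellin (fun x : ℝ ↦ Complex.exp (-(a * x)) / (1 - Complex.exp (-x))) s =
      Complex.Gamma s * HZ s a := by
  have hexp : ∀ x ∈ Ioi (0 : ℝ), HasSum (fun k : ℕ ↦ 1 * (Real.exp (-(k + a) * x) : ℂ))
      (Complex.exp (-(a * x)) / (1 - Complex.exp (-x))) := by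
    intro x hx
    simpa only [one_mul] using hasSum_exp_neg_add_mul a hx
  have hsummable : Summable fun k : ℕ ↦ ‖(1 : ℂ)‖ / (k + a) ^ s.re := by
    refine ((Real.summable_one_div_nat_add_rpow a s.re).2 hs).congr fun k ↦ ?_
    rw [norm_one, abs_of_pos (by positivity)]
  refine (hasSum_mellin (fun k ↦ Or.inr (by positivity)) (by linarith) hexp hsummable).unique ?_
  convert! (hasSum_HZ ha hs).mul_left (Complex.Gamma s) using 2
  push_cast
  ring

theorem hasMellin_exp_neg_mul {z : ℂ} (hs : 0 < s.re) (hz : 0 < z.re) :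
    HasMellin (fun x : ℝ ↦ Complex.exp (-(z * x))) s (z ^ (-s) * Complex.Gamma s) :=
  ⟨integrableOn_cpow_mul_cexp_neg_mul hs hz, integral_cpow_mul_cexp_neg_mul_Ioi hs hz⟩

theorem hasMellin_exp_neg_mul_div {z : ℂ} (hs : 1 < s.re) (hz : 0 < z.re) :
    HasMellin (fun x : ℝ ↦ Complex.exp (-(z * x)) / x) s
      (z ^ (1 - s) * Complex.Gamma s / (s - 1)) := by
  have hne : s - 1 ≠ 0 := fun h ↦ by simp [sub_eq_zero.1 h] at hs
  obtain ⟨hconv, hval⟩ := hasMellin_exp_neg_mul (s := s + -1) (by simpa using hs) hz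
  have hdiv : (fun x : ℝ ↦ Complex.exp (-(z * x)) / x) =
      fun x : ℝ ↦ (x : ℂ) ^ (-1 : ℂ) • Complex.exp (-(z * x)) := by
    ext x
    rw [Complex.cpow_neg_one, smul_eq_mul, inv_mul_eq_div]
  have hGamma : Complex.Gamma s = (s - 1) * Complex.Gamma (s - 1) := by
    rw [← Complex.Gamma_add_one _ hne, sub_add_cancel]
  rw [hdiv]
  refine ⟨MellinConvergent.cpow_smul.2 hconv, ?_⟩
  rw [mellin_cpow_smul, hval, hGamma, ← sub_eq_add_neg, neg_sub, eq_div_iff hne]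
  ring

theorem mellin_exp_neg_mul_binetKernel (ha : 0 < a) (hs : 1 < s.re) :
    mellin (fun x : ℝ ↦ Complex.exp (-(a * x)) * binetKernel x) s = Complex.Gamma s * P1 a s := by
  have ha' : 0 < (a : ℂ).re := by simpa using ha
  have hs' : 0 < s.re := one_pos.trans hs
  have hbinet := mellinConvergent_exp_neg_mul_binetKernel ha hs'
  have hhalf := (hasMellin_exp_neg_mul hs' ha').1.const_smul (1 / 2 : ℂ)
  obtain ⟨hpole, hpole_val⟩ := hasMellin_exp_neg_mul_div hs ha'
  have hsplit : (fun x : ℝ ↦ Complex.exp (-(a * x)) / (1 - Complex.exp (-x))) = fun x : ℝ ↦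
      Complex.exp (-(a * x)) * binetKernel x + (1 / 2 : ℂ) • Complex.exp (-(a * x)) +
        Complex.exp (-(a * x)) / x := by
    ext x
    rw [binetKernel, smul_eq_mul]
    push_cast
    ring
  have hsum := mellin_exp_neg_mul_div_one_sub_exp_neg ha hs
  rw [hsplit, (hasMellin_add (hasMellin_add hbinet hhalf).1 hpole).2,
    (hasMellin_add hbinet hhalf).2, hpole_val, mellin_const_smul,
    (hasMellin_exp_neg_mul hs' ha').2, smul_eq_mul] at hsum
  rw [P1]
  linear_combination hsum

theorem differentiableAt_HZ (a : ℝ) (hs : s ≠ 1) : DifferentiableAt ℂ (HZ · a) s := by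
  refine (HurwitzZeta.differentiableAt_hurwitzZeta _ hs).sub (DifferentiableAt.fun_sum fun j _ ↦ ?_)
  refine DifferentiableAt.const_cpow (by fun_prop) (Or.inl ?_)
  have hpos : 0 < a - ((⌈a⌉ : ℝ) - 1) + j := by
    linarith [Int.ceil_lt_add_one a, Nat.cast_nonneg (α := ℝ) j]
  exact_mod_cast hpos.ne'

theorem differentiableAt_P1 (ha : a ≠ 0) (hs : s ≠ 1) : DifferentiableAt ℂ (P1 a) s := by
  have ha' : (a : ℂ) ≠ 0 := by exact_mod_cast ha
  refine ((differentiableAt_HZ a hs).sub ?_).sub ?_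
  · exact (DifferentiableAt.const_cpow (by fun_prop) (Or.inl ha')).div_const _
  · exact (DifferentiableAt.const_cpow (by fun_prop) (Or.inl ha')).div (by fun_prop)
      (sub_ne_zero.2 hs)

end HurwitzZeta

section HermiteFormula

variable {a : ℝ} {s : ℂ}

theorem hermiteIntegral_eq_of_one_lt_re (ha : 0 < a) (hs : 1 < s.re) :
    hermiteIntegral a s = 1 / 2 * P1 a s := by
  have hs' : 0 < s.re := one_pos.trans hs
  apply mul_left_cancel₀ (Complex.Gamma_ne_zero_of_re_pos hs')
  rw [Gamma_mul_hermiteIntegral ha hs', mellin_exp_neg_mul_binetKernel ha hs]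
  ring

theorem hermiteIntegral_eq (ha : 0 < a) (hs : s ≠ 1) :
    hermiteIntegral a s = 1 / 2 * P1 a s := by
  have hconn : IsPreconnected ({1}ᶜ : Set ℂ) :=
    (isConnected_compl_singleton_of_one_lt_rank (by simp) 1).isPreconnected
  have hright : DifferentiableOn ℂ (fun s ↦ 1 / 2 * P1 a s) {1}ᶜ := fun z hz ↦
    ((differentiableAt_P1 ha.ne' hz).const_mul _).differentiableWithinAt
  have hhalf_plane : {z : ℂ | 1 < z.re} ∈ 𝓝 2 :=
    (isOpen_lt continuous_const Complex.continuous_re).mem_nhds (by simp)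
  exact ((differentiable_hermiteIntegral ha).differentiableOn.analyticOnNhd
    isOpen_compl_singleton).eqOn_of_preconnected_of_eventuallyEq
    (hright.analyticOnNhd isOpen_compl_singleton) hconn (by simp : (2 : ℂ) ∈ ({1}ᶜ : Set ℂ))
    (eventually_of_mem hhalf_plane fun z hz ↦ hermiteIntegral_eq_of_one_lt_re ha hz) hs

end HermiteFormula

section BinomialExpansion

theorem sub_pow_mul_cpow_neg {z : ℂ} (hz : z ≠ 0) (a s : ℂ) (N : ℕ) :
    (z - a) ^ N * z ^ (-s) = ∑ m ∈ Finset.range (N + 1),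
      (-1) ^ m * (Nat.choose N m : ℂ) * a ^ m * z ^ (-(m + s - N)) := by
  rw [sub_eq_neg_add, add_pow, Finset.sum_mul]
  refine Finset.sum_congr rfl fun m hm ↦ ?_
  have hexponent : (-(m + s - N) : ℂ) = ((N - m : ℕ) : ℂ) + -s := by
    rw [Nat.cast_sub (Nat.lt_succ_iff.1 (Finset.mem_range.1 hm))]
    ring
  rw [hexponent, Complex.cpow_add _ _ hz, Complex.cpow_natCast, neg_pow a]
  ring

theorem pow_mul_add_mul_I_cpow_neg {a : ℝ} (ha : a ≠ 0) (n : ℕ) (s : ℂ) (t : ℝ) :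
    (t : ℂ) ^ (2 * n) * (a + t * I : ℂ) ^ (-s) = ∑ m ∈ Finset.range (2 * n + 1),
      (-1) ^ (m + n) * (Nat.choose (2 * n) m : ℂ) * (a : ℂ) ^ m *
        (a + t * I : ℂ) ^ (-(m + s - 2 * n)) := by
  have hpow : (t : ℂ) ^ (2 * n) = (-1) ^ n * ((a + t * I : ℂ) - a) ^ (2 * n) := by
    rw [add_sub_cancel_left, mul_pow, pow_mul I, I_sq, mul_left_comm, ← mul_pow]
    simp
  rw [hpow, mul_assoc, sub_pow_mul_cpow_neg (add_mul_I_ne_zero ha t), Finset.mul_sum]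
  push_cast
  exact Finset.sum_congr rfl fun m _ ↦ by ring

theorem pow_mul_hermiteKernel {a : ℝ} (ha : 0 < a) (n : ℕ) (s : ℂ) (t : ℝ) :
    (t : ℂ) ^ (2 * n) * hermiteKernel a s t = ∑ m ∈ Finset.range (2 * n + 1),
      (-1) ^ (m + n) * (Nat.choose (2 * n) m : ℂ) * (a : ℂ) ^ m *
        hermiteKernel a (m + s - 2 * n) t := by
  have hadd := pow_mul_add_mul_I_cpow_neg ha.ne' n s t
  have hsub := pow_mul_add_mul_I_cpow_neg ha.ne' n s (-t)
  simp only [Complex.ofReal_neg, neg_mul, ← sub_eq_add_neg, (even_two_mul n).neg_pow] at hsub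
  simp only [hermiteKernel_eq ha, mul_div_assoc', mul_sub, hadd, hsub, ← Finset.sum_sub_distrib,
    Finset.sum_div]

end BinomialExpansion

theorem integral_pow_mul_sin_div_eq_sum_hermiteIntegral {a : ℝ} (ha : 0 < a) (n : ℕ) (s : ℂ) :
    ∫ t in Ioi (0 : ℝ),
        (t : ℂ) ^ (2 * n) * Complex.sin (s * (Real.arctan (t / a) : ℂ)) /
          (((a ^ 2 + t ^ 2 : ℝ) : ℂ) ^ (s / 2) * ((Real.exp (2 * π * t) - 1 : ℝ) : ℂ)) =
      ∑ m ∈ Finset.range (2 * n + 1),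
        (-1) ^ (m + n) * (Nat.choose (2 * n) m : ℂ) * (a : ℂ) ^ m *
          hermiteIntegral a (m + s - 2 * n) := by
  simp only [← div_div, mul_div_assoc, hermiteIntegral, ← integral_const_mul]
  rw [← integral_finsetSum _ fun m _ ↦ (integrableOn_hermiteKernel_div ha _).const_mul _]
  congr 1 with t
  rw [← hermiteKernel, mul_div_assoc', pow_mul_hermiteKernel ha, Finset.sum_div]
  simp only [mul_div_assoc']

theorem natCast_add_ne_one {w : ℂ} (hw : 0 < w.re) (hw1 : w ≠ 1) (m : ℕ) : (m + w : ℂ) ≠ 1 := by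
  intro h
  rcases m.eq_zero_or_pos with rfl | hm
  · exact hw1 (by simpa using h)
  · have hre : (m : ℝ) + w.re = 1 := by simpa using congrArg Complex.re h
    linarith [Nat.one_le_cast (α := ℝ).2 hm]

theorem stmt_8_general (n : ℕ) (a : ℝ) (ha : 0 < a) (s : ℂ)
    (hs : ∀ m ∈ Finset.range (2 * n + 1), (m + s - 2 * n : ℂ) ≠ 1) :
    ∫ t in Ioi (0 : ℝ),
        (t : ℂ) ^ (2 * n) * Complex.sin (s * (Real.arctan (t / a) : ℂ)) /
          (((a ^ 2 + t ^ 2 : ℝ) : ℂ) ^ (s / 2) * ((Real.exp (2 * π * t) - 1 : ℝ) : ℂ)) =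
      (1 / 2) * ∑ m ∈ Finset.range (2 * n + 1),
        (-1) ^ (m + n) * (Nat.choose (2 * n) m : ℂ) * (a : ℂ) ^ m *
          P1 a (m + s - 2 * n) := by
  rw [integral_pow_mul_sin_div_eq_sum_hermiteIntegral ha, Finset.mul_sum]
  refine Finset.sum_congr rfl fun m hm ↦ ?_
  rw [hermiteIntegral_eq ha (hs m hm)]
  ring

theorem stmt_8 (n : ℕ) (a : ℝ) (ha : 0 < a) (s : ℂ)
    (hs : (2 * n : ℝ) < s.re) (hs1 : s - 2 * n ≠ 1) :
    ∫ t in Ioi (0 : ℝ),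
        (t : ℂ) ^ (2 * n) * Complex.sin (s * (Real.arctan (t / a) : ℂ)) /
          (((a ^ 2 + t ^ 2 : ℝ) : ℂ) ^ (s / 2) * ((Real.exp (2 * π * t) - 1 : ℝ) : ℂ)) =
      (1 / 2) * ∑ m ∈ Finset.range (2 * n + 1),
        (-1) ^ (m + n) * (Nat.choose (2 * n) m : ℂ) * (a : ℂ) ^ m *
          P1 a (m + s - 2 * n) :=
  stmt_8_general n a ha s fun m _ ↦ by
    simpa only [add_sub_assoc] using natCast_add_ne_one (by simpa using hs) hs1 m
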